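/- Let (p_n) be a sequence in [0,1] with limsup_{n→∞} n·p_n < ∞. Then for every ε > 0, with high probability the Erdős–Rényi random graph G ~ 𝔾(n, p_n) has an ε-almost-internal bisection and an ε-almost-external bisection. -/

import Mathlib

open MeasureTheory Filter

/-- Bernoulli measure on `Bool` with parameter `p`. -/
noncomputable def bernoulliM (p : ℝ) : Measure Bool :=
  (Real.toNNReal p) • Measure.dirac true + (Real.toNNReal (1 - p)) • Measure.dirac false

instance (p : ℝ) : IsFiniteMeasure (bernoulliM p) := by
  unfold bernoulliM; infer_instance

/-- The Erdős–Rényi measure `𝔾(n,p)`: a random symmetric adjacency structure is encoded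
by a matrix of independent Bernoulli(p) entries, of which only the entries strictly
above the diagonal are used (via `GrAdj`). -/
noncomputable def erMeasure (n : ℕ) (p : ℝ) : Measure (Fin n → Fin n → Bool) :=
  Measure.pi fun _ => Measure.pi fun _ => bernoulliM p

/-- Adjacency in the graph encoded by the matrix `A`: distinct vertices `u, v` are
adjacent iff the entry of `A` at the ordered pair `(min u v, max u v)` is `true`. -/
def GrAdj {n : ℕ} (A : Fin n → Fin n → Bool) (u v : Fin n) : Prop :=
  u ≠ v ∧ A (min u v) (max u v) = true

/-- A red-blue colouring of `Fin n` is a *bisection* if its two colour classes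
differ in size by at most 1. -/
def IsBisection {n : ℕ} (c : Fin n → Bool) : Prop :=
  |(({v | c v = true} : Set (Fin n)).ncard : ℤ) -
    (({v | c v = false} : Set (Fin n)).ncard : ℤ)| ≤ 1

/-- Vertex `v` has at least half of its neighbours in its own colour class. -/
def InternalAt {n : ℕ} (A : Fin n → Fin n → Bool) (c : Fin n → Bool) (v : Fin n) : Prop :=
  ({w | GrAdj A v w} : Set (Fin n)).ncard ≤
    2 * ({w | GrAdj A v w ∧ c w = c v} : Set (Fin n)).ncard

/-- Vertex `v` has at least half of its neighbours in the opposite colour class. -/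
def ExternalAt {n : ℕ} (A : Fin n → Fin n → Bool) (c : Fin n → Bool) (v : Fin n) : Prop :=
  ({w | GrAdj A v w} : Set (Fin n)).ncard ≤
    2 * ({w | GrAdj A v w ∧ c w ≠ c v} : Set (Fin n)).ncard

/-- All but at most `ε * n` vertices are internal. -/
def AlmostInternal {n : ℕ} (A : Fin n → Fin n → Bool) (c : Fin n → Bool) (ε : ℝ) : Prop :=
  ((({v | ¬ InternalAt A c v} : Set (Fin n)).ncard : ℝ)) ≤ ε * n

/-- All but at most `ε * n` vertices are external. -/
def AlmostExternal {n : ℕ} (A : Fin n → Fin n → Bool) (c : Fin n → Bool) (ε : ℝ) : Prop :=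
  ((({v | ¬ ExternalAt A c v} : Set (Fin n)).ncard : ℝ)) ≤ ε * n

/-!
Start from a uniformly random `±1` colouring of a graph of maximum degree `Δ`, properly coloured
with `Δ + 1` classes. Flipping all unhappy vertices of one class raises the energy (the number of
satisfied minus violated edges) by at least the number of flips. Choosing the class with the most
unhappy vertices on average, the bounded energy forces few unhappy vertices on average after a
number of rounds that does not depend on the number `n` of vertices.

The resulting map on colourings is odd and local, so the final colours of vertices depending on
disjoint sets of inputs are uncorrelated. The imbalance of the final colouring therefore has second
moment `O(n)`, and a bisection is reached by recolouring `O(√n)` further vertices, each of which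
affects at most `Δ + 1` vertices. In `𝔾(n, p)` with `n * p` bounded, the squared degrees sum to
`O(n)` on average, so deleting the edges at vertices of degree larger than a constant affects few
vertices.
-/

open Finset
open Fintype (card)
open scoped BigOperators

section Margin

variable {V : Type*} [Fintype V] (G : SimpleGraph V) [DecidableRel G.Adj] (s : ℤˣ)

theorem colorable_of_degree_le {G : SimpleGraph V} [DecidableRel G.Adj] {Δ : ℕ}
    (hΔ : ∀ v, G.degree v ≤ Δ) : G.Colorable (Δ + 1) := by
  classical
  suffices ∀ S : Finset V, ∃ f : V → Fin (Δ + 1), ∀ u ∈ S, ∀ v ∈ S, G.Adj u v → f u ≠ f v by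
    obtain ⟨f, hf⟩ := this univ
    exact ⟨.mk f fun {u v} => hf u (mem_univ u) v (mem_univ v)⟩
  intro S
  induction S using Finset.induction_on with
  | empty => exact ⟨0, by simp⟩
  | insert a S _ ih =>
    obtain ⟨f, hf⟩ := ih
    obtain ⟨k, hk⟩ : ∃ k, k ∉ (G.neighborFinset a).image f := by
      by_contra! hall
      have : #(univ : Finset (Fin (Δ + 1))) ≤ Δ :=
        (card_le_card fun k _ => hall k).trans (card_image_le.trans (hΔ a))
      simp at this
    have hfree : ∀ w, G.Adj a w → f w ≠ k := fun w haw hwk =>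
      hk (mem_image.2 ⟨w, (G.mem_neighborFinset a w).2 haw, hwk⟩)
    refine ⟨Function.update f a k, fun u hu v hv huv => ?_⟩
    rcases eq_or_ne u a with rfl | hua
    · rw [Function.update_self, Function.update_of_ne huv.ne']
      exact (hfree v huv).symm
    rcases eq_or_ne v a with rfl | hva
    · rw [Function.update_self, Function.update_of_ne hua]
      exact hfree u huv.symm
    · rw [Function.update_of_ne hua, Function.update_of_ne hva]
      exact hf u (mem_of_mem_insert_of_ne hu hua) v (mem_of_mem_insert_of_ne hv hva) huv

/-- The margin of `v` under the colouring `c` with colours `±1`: for `s = 1` the number of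
neighbours of `v` of its own colour minus the number of neighbours of the opposite colour, and for
`s = -1` its negative, so that the internal and the external case are treated together. -/
def margin (c : V → ℤˣ) (v : V) : ℤ :=
  ∑ w ∈ G.neighborFinset v, (s * c v * c w : ℤˣ)

/-- The vertices with fewer than half of their neighbours in their own (`s = 1`), respectively the
opposite (`s = -1`), colour class. -/
def unhappy (c : V → ℤˣ) : Finset V :=
  {v | margin G s c v < 0}

/-- The energy that flipping unhappy vertices increases; each edge contributes twice. -/
def totalMargin (c : V → ℤˣ) : ℤ :=
  ∑ v, margin G s c v

theorem mem_unhappy {c : V → ℤˣ} {v : V} : v ∈ unhappy G s c ↔ margin G s c v < 0 := by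
  simp [unhappy]

theorem margin_eq_two_mul_card_sub_degree (c : V → ℤˣ) (v : V) :
    margin G s c v = 2 * #{w ∈ G.neighborFinset v | c w = s * c v} - G.degree v := by
  have hterm (w : V) : ((s * c v * c w : ℤˣ) : ℤ) = 2 * (if c w = s * c v then 1 else 0) - 1 := by
    rcases Int.units_eq_one_or (s * c v) with h | h <;>
      rcases Int.units_eq_one_or (c w) with h' | h' <;> simp [h, h']
  simp only [margin, hterm, sum_sub_distrib, ← mul_sum, sum_boole, sum_const, nsmul_one,
    SimpleGraph.card_neighborFinset_eq_degree]

theorem margin_congr {G G' : SimpleGraph V} [DecidableRel G.Adj] [DecidableRel G'.Adj] {s : ℤˣ}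
    {c c' : V → ℤˣ} {v : V} (hG : ∀ w, G.Adj v w ↔ G'.Adj v w) (hv : c v = c' v)
    (hc : ∀ w, G.Adj v w → c w = c' w) : margin G s c v = margin G' s c' v :=
  sum_congr (by ext w; simp [hG]) fun w hw => by
    rw [hv, hc w ((hG w).2 ((G'.mem_neighborFinset v w).1 hw))]

theorem margin_neg (c : V → ℤˣ) : margin G s (-c) = margin G s c := by
  ext v; simp [margin]

theorem unhappy_neg (c : V → ℤˣ) : unhappy G s (-c) = unhappy G s c := by
  simp only [unhappy, margin_neg]

theorem abs_totalMargin_le {G : SimpleGraph V} [DecidableRel G.Adj] {Δ : ℕ}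
    (hΔ : ∀ v, G.degree v ≤ Δ) (c : V → ℤˣ) : |totalMargin G s c| ≤ Δ * card V := by
  have hmargin (v : V) : |margin G s c v| ≤ Δ := by
    have hcard := card_filter_le (G.neighborFinset v) fun w => c w = s * c v
    rw [G.card_neighborFinset_eq_degree] at hcard
    rw [margin_eq_two_mul_card_sub_degree, abs_le]
    have := hΔ v
    omega
  calc |totalMargin G s c| ≤ ∑ v, |margin G s c v| := abs_sum_le_sum_abs _ _
    _ ≤ ∑ _v : V, (Δ : ℤ) := sum_le_sum fun v _ => hmargin v
    _ = Δ * card V := by simp [mul_comm]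

theorem abs_expect_totalMargin_le {ι : Type*} [Fintype ι] [Nonempty ι] {G : SimpleGraph V}
    [DecidableRel G.Adj] {Δ : ℕ} (hΔ : ∀ v, G.degree v ≤ Δ) (c : ι → V → ℤˣ) :
    |𝔼 i, (totalMargin G s (c i) : ℝ)| ≤ Δ * card V :=
  (abs_expect_le _ _).trans <| expect_le univ_nonempty fun i _ => by
    exact_mod_cast abs_totalMargin_le s hΔ (c i)

variable [DecidableEq V]

theorem totalMargin_piecewise_neg {G : SimpleGraph V} [DecidableRel G.Adj] {U : Finset V}
    (hU : G.IsIndepSet (U : Set V)) (c : V → ℤˣ) :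
    totalMargin G s (U.piecewise (-c) c) = totalMargin G s c - 4 * ∑ v ∈ U, margin G s c v := by
  let b (v : V) : ℤ := if v ∈ U then 1 else 0
  let J (u v : V) : ℤ := if G.Adj u v then (s * c u * c v : ℤˣ) else 0
  have hmargin (v : V) : margin G s c v = ∑ w, J v w := by
    simp only [margin, J, ← sum_filter, SimpleGraph.neighborFinset_eq_filter]
  have hflip (v : V) : ((U.piecewise (-c) c v : ℤˣ) : ℤ) = (1 - 2 * b v) * c v := by
    by_cases hv : v ∈ U <;> simp [b, hv]
  have hindep (u v : V) (huv : G.Adj u v) : b u * b v = 0 := by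
    by_cases hu : u ∈ U
    · have hv : v ∉ U := fun hv => hU hu hv huv.ne huv
      simp [b, hv]
    · simp [b, hu]
  have hterm (u v : V) :
      (if G.Adj u v then ((s * U.piecewise (-c) c u * U.piecewise (-c) c v : ℤˣ) : ℤ) else 0) =
        J u v - 2 * (b u * J u v) - 2 * (b v * J v u) := by
    by_cases huv : G.Adj u v
    · simp only [J, huv, huv.symm, if_true, Units.val_mul, hflip]
      linear_combination (4 * s * c u * c v : ℤ) * hindep u v huv
    · simp [J, huv, G.adj_comm v u]
  have hsum : ∑ u, ∑ v, b u * J u v = ∑ v ∈ U, margin G s c v := by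
    simp only [hmargin, ← mul_sum]
    simp [b]
  calc totalMargin G s (U.piecewise (-c) c)
      = ∑ u, ∑ v, (J u v - 2 * (b u * J u v) - 2 * (b v * J v u)) := by
        simp only [totalMargin, margin, ← hterm, ← sum_filter, SimpleGraph.neighborFinset_eq_filter]
    _ = ∑ u, ∑ v, J u v - 2 * ∑ u, ∑ v, b u * J u v - 2 * ∑ u, ∑ v, b v * J v u := by
        simp only [sum_sub_distrib, mul_sum]
    _ = totalMargin G s c - 4 * ∑ v ∈ U, margin G s c v := by
        rw [sum_comm (f := fun u v => b v * J v u), hsum, totalMargin]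
        simp only [hmargin]
        ring

/-- One round of the dynamics: the unhappy vertices of `A` change colour simultaneously. It is used
for independent sets `A`, where these changes do not interfere. -/
def flipUnhappy (A : Finset V) (c : V → ℤˣ) : V → ℤˣ :=
  (A ∩ unhappy G s c).piecewise (-c) c

theorem totalMargin_flipUnhappy {G : SimpleGraph V} [DecidableRel G.Adj] {A : Finset V}
    (hA : G.IsIndepSet (A : Set V)) (c : V → ℤˣ) :
    totalMargin G s c + 4 * #(A ∩ unhappy G s c) ≤ totalMargin G s (flipUnhappy G s A c) := by
  have hindep : G.IsIndepSet ((A ∩ unhappy G s c : Finset V) : Set V) :=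
    hA.mono (coe_subset.2 inter_subset_left)
  have hneg : ∑ v ∈ A ∩ unhappy G s c, margin G s c v ≤ -#(A ∩ unhappy G s c) := by
    calc ∑ v ∈ A ∩ unhappy G s c, margin G s c v ≤ ∑ _v ∈ A ∩ unhappy G s c, (-1) :=
          sum_le_sum fun v hv => by
            have := (mem_unhappy G s).1 (mem_inter.1 hv).2
            omega
      _ = -#(A ∩ unhappy G s c) := by simp
  rw [flipUnhappy, totalMargin_piecewise_neg s hindep]
  linarith

theorem odd_flipUnhappy (A : Finset V) : Function.Odd (flipUnhappy G s A) := by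
  intro c
  ext v
  by_cases hv : v ∈ A ∩ unhappy G s c <;> simp [flipUnhappy, unhappy_neg, hv]

end Margin

section LocalMap

variable {V α : Type*} [Fintype V] [DecidableEq V]

/-- `F` is local with bound `B` if each output coordinate depends on at most `B` input coordinates
and each input coordinate influences at most `B` output coordinates; `N v` lists the inputs on which
the output at `v` may depend. -/
def IsLocalMap (B : ℕ) (F : (V → α) → V → α) : Prop :=
  ∃ N : V → Finset V, (∀ v, #(N v) ≤ B) ∧ (∀ w, #{v | w ∈ N v} ≤ B) ∧
    ∀ v, DependsOn (fun x => F x v) (N v : Set V)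

theorem isLocalMap_id : IsLocalMap 1 (id : (V → α) → V → α) :=
  ⟨fun v => {v}, by simp, fun w => card_le_one.2 (by simp), fun v x y h => h v (by simp)⟩

theorem IsLocalMap.mono {B B' : ℕ} {F : (V → α) → V → α} (hF : IsLocalMap B F) (hB : B ≤ B') :
    IsLocalMap B' F := by
  obtain ⟨N, hout, hin, hdep⟩ := hF
  exact ⟨N, fun v => (hout v).trans hB, fun w => (hin w).trans hB, hdep⟩

theorem IsLocalMap.comp {B₁ B₂ : ℕ} {F₁ F₂ : (V → α) → V → α} (h₁ : IsLocalMap B₁ F₁)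
    (h₂ : IsLocalMap B₂ F₂) : IsLocalMap (B₁ * B₂) (F₁ ∘ F₂) := by
  obtain ⟨N₁, hout₁, hin₁, hdep₁⟩ := h₁
  obtain ⟨N₂, hout₂, hin₂, hdep₂⟩ := h₂
  refine ⟨fun v => (N₁ v).biUnion N₂, fun v => ?_, fun w => ?_, fun v x y hxy => ?_⟩
  · exact (card_biUnion_le_card_mul _ _ _ fun u _ => hout₂ u).trans (by gcongr; exact hout₁ v)
  · have hsub : ({v | w ∈ (N₁ v).biUnion N₂} : Finset V) ⊆
        ({u | w ∈ N₂ u} : Finset V).biUnion fun u => {v | u ∈ N₁ v} := by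
      intro v
      simp only [mem_filter_univ, mem_biUnion]
      exact fun ⟨u, huv, hwu⟩ => ⟨u, hwu, huv⟩
    calc #{v | w ∈ (N₁ v).biUnion N₂} ≤ #{u | w ∈ N₂ u} * B₁ :=
          (card_le_card hsub).trans (card_biUnion_le_card_mul _ _ _ fun u _ => hin₁ u)
      _ ≤ B₁ * B₂ := by rw [mul_comm]; gcongr; exact hin₂ w
  · exact hdep₁ v fun u hu => hdep₂ u fun w hw => hxy w (mem_biUnion.2 ⟨u, hu, hw⟩)

end LocalMap

section Dynamics

variable {V : Type*} [Fintype V] [DecidableEq V] (s : ℤˣ)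

theorem isLocalMap_flipUnhappy {G : SimpleGraph V} [DecidableRel G.Adj] {Δ : ℕ}
    (hΔ : ∀ v, G.degree v ≤ Δ) (A : Finset V) : IsLocalMap (Δ + 1) (flipUnhappy G s A) := by
  have hcard (v : V) : #(insert v (G.neighborFinset v)) ≤ Δ + 1 :=
    (card_insert_le _ _).trans (Nat.succ_le_succ (hΔ v))
  refine ⟨fun v => insert v (G.neighborFinset v), hcard, fun w => ?_, fun v x y hxy => ?_⟩
  · convert hcard w using 2
    ext v
    simp [eq_comm, G.adj_comm]
  · have hv : x v = y v := hxy v (by simp)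
    have hmargin : margin G s x v = margin G s y v :=
      margin_congr (fun _ => Iff.rfl) hv fun w hw => hxy w (by simp [hw])
    simp [flipUnhappy, Finset.piecewise, mem_unhappy, hmargin, hv]

theorem exists_isIndepSet_expect_totalMargin_flipUnhappy {ι κ : Type*} [Fintype ι] [Fintype κ]
    [Nonempty κ] {G : SimpleGraph V} [DecidableRel G.Adj] (col : G.Coloring κ) (c : ι → V → ℤˣ) :
    ∃ A : Finset V, G.IsIndepSet (A : Set V) ∧
      𝔼 i, (totalMargin G s (c i) : ℝ) + 4 / card κ * 𝔼 i, (#(unhappy G s (c i)) : ℝ) ≤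
        𝔼 i, (totalMargin G s (flipUnhappy G s A (c i)) : ℝ) := by
  classical
  let A (k : κ) : Finset V := {v | col v = k}
  have hA (k : κ) : G.IsIndepSet (A k : Set V) := by
    rw [coe_filter_univ]
    exact col.isIndepSet_colorClass k
  have hsplit : ∑ k, 𝔼 i, (#(A k ∩ unhappy G s (c i)) : ℝ) = 𝔼 i, (#(unhappy G s (c i)) : ℝ) := by
    rw [← expect_sum_comm]
    refine expect_congr rfl fun i _ => ?_
    rw [card_eq_sum_card_fiberwise (f := col) (t := univ) fun _ _ => by simp]
    push_cast
    refine sum_congr rfl fun k _ => ?_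
    congr 2
    ext v
    simp [A, and_comm]
  obtain ⟨k, -, hk⟩ : ∃ k ∈ univ, 𝔼 i, (#(unhappy G s (c i)) : ℝ) / card κ ≤
      𝔼 i, (#(A k ∩ unhappy G s (c i)) : ℝ) := by
    refine exists_le_of_sum_le univ_nonempty (le_of_eq ?_)
    rw [hsplit, sum_const, card_univ, nsmul_eq_mul, ← expect_div,
      mul_div_cancel₀ _ (Nat.cast_ne_zero.2 Fintype.card_ne_zero)]
  refine ⟨A k, hA k, ?_⟩
  calc 𝔼 i, (totalMargin G s (c i) : ℝ) + 4 / card κ * 𝔼 i, (#(unhappy G s (c i)) : ℝ)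
      ≤ 𝔼 i, (totalMargin G s (c i) : ℝ) + 4 * 𝔼 i, (#(A k ∩ unhappy G s (c i)) : ℝ) := by
        rw [← expect_div] at hk
        rw [div_mul_eq_mul_div, mul_div_assoc]
        gcongr
    _ = 𝔼 i, (totalMargin G s (c i) + 4 * #(A k ∩ unhappy G s (c i)) : ℝ) := by
        rw [expect_add_distrib, mul_expect]
    _ ≤ 𝔼 i, (totalMargin G s (flipUnhappy G s (A k) (c i)) : ℝ) :=
        expect_le_expect fun i _ => by exact_mod_cast totalMargin_flipUnhappy s (hA k) (c i)

-- While more than `η * card V` vertices are unhappy on average, each round gains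
-- `4 / (Δ + 1) * (η * card V)` on the initial energy, which is at least `-(Δ * card V)`.
theorem exists_odd_isLocalMap_expect_card_unhappy_le_or {G : SimpleGraph V} [DecidableRel G.Adj]
    {Δ : ℕ} (hΔ : ∀ v, G.degree v ≤ Δ) (η : ℝ) (t : ℕ) :
    ∃ F : (V → ℤˣ) → V → ℤˣ, Function.Odd F ∧ IsLocalMap ((Δ + 1) ^ t) F ∧
      (𝔼 x, (#(unhappy G s (F x)) : ℝ) ≤ η * card V ∨
        -(Δ * card V) + t * (4 / (Δ + 1) * (η * card V)) ≤
          𝔼 x, (totalMargin G s (F x) : ℝ)) := by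
  induction t with
  | zero =>
    refine ⟨id, fun _ => rfl, isLocalMap_id, .inr ?_⟩
    simpa using (abs_le.1 (abs_expect_totalMargin_le s hΔ (id : (V → ℤˣ) → V → ℤˣ))).1
  | succ t ih =>
    obtain ⟨F, hodd, hloc, hF⟩ := ih
    by_cases hfew : 𝔼 x, (#(unhappy G s (F x)) : ℝ) ≤ η * card V
    · exact ⟨F, hodd, hloc.mono (Nat.pow_le_pow_right Δ.succ_pos t.le_succ), .inl hfew⟩
    obtain ⟨A, -, hA⟩ :=
      exists_isIndepSet_expect_totalMargin_flipUnhappy s (colorable_of_degree_le hΔ).some F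
    refine ⟨flipUnhappy G s A ∘ F, fun x => ?_, ?_, .inr ?_⟩
    · rw [Function.comp_apply, hodd x, odd_flipUnhappy, Function.comp_apply]
    · rw [pow_succ']
      exact (isLocalMap_flipUnhappy s hΔ A).comp hloc
    · have hgain : 4 / ((Δ : ℝ) + 1) * (η * card V) ≤
          4 / (Δ + 1) * 𝔼 x, (#(unhappy G s (F x)) : ℝ) := by
        gcongr
        exact (not_le.1 hfew).le
      have henergy := hF.resolve_left hfew
      push_cast [Fintype.card_fin] at hA ⊢
      simp only [Function.comp_apply]
      linarith

theorem exists_odd_isLocalMap_expect_card_unhappy_le {G : SimpleGraph V} [DecidableRel G.Adj]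
    {Δ : ℕ} (hΔ : ∀ v, G.degree v ≤ Δ) {η : ℝ} {T : ℕ} (hT : 2 * Δ < T * (4 / (Δ + 1) * η)) :
    ∃ F : (V → ℤˣ) → V → ℤˣ, Function.Odd F ∧ IsLocalMap ((Δ + 1) ^ T) F ∧
      𝔼 x, (#(unhappy G s (F x)) : ℝ) ≤ η * card V := by
  obtain ⟨F, hodd, hloc, hfew | henergy⟩ :=
    exists_odd_isLocalMap_expect_card_unhappy_le_or s hΔ η T
  · exact ⟨F, hodd, hloc, hfew⟩
  · cases isEmpty_or_nonempty V
    · exact ⟨F, hodd, hloc, by simp [unhappy]⟩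
    have hupper := (abs_le.1 (abs_expect_totalMargin_le s hΔ F)).2
    have hV : (0 : ℝ) < card V := by exact_mod_cast Fintype.card_pos
    linarith [mul_lt_mul_of_pos_right hT hV]

end Dynamics

section Imbalance

variable {V : Type*} [Fintype V]

/-- The difference between the sizes of the two colour classes, with sign. -/
def imbalance (c : V → ℤˣ) : ℤ := ∑ v, (c v : ℤ)

theorem imbalance_neg (c : V → ℤˣ) : imbalance (-c) = -imbalance c := by
  simp [imbalance]

theorem imbalance_piecewise_neg [DecidableEq V] (U : Finset V) (c : V → ℤˣ) :
    imbalance (U.piecewise (-c) c) = imbalance c - 2 * ∑ v ∈ U, (c v : ℤ) := by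
  have hterm (v : V) :
      ((U.piecewise (-c) c v : ℤˣ) : ℤ) = c v - 2 * if v ∈ U then (c v : ℤ) else 0 := by
    by_cases hv : v ∈ U <;> simp [hv]
    ring
  simp [imbalance, hterm, ← mul_sum]

theorem exists_abs_imbalance_le_one (c : V → ℤˣ) :
    ∃ c' : V → ℤˣ, |imbalance c'| ≤ 1 ∧ #{v | c' v ≠ c v} ≤ |imbalance c| := by
  classical
  wlog hpos : 0 ≤ imbalance c generalizing c
  · obtain ⟨c', hc', hdiff⟩ := this (-c) (by rw [imbalance_neg]; omega)
    refine ⟨-c', by rwa [imbalance_neg, abs_neg], ?_⟩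
    simpa [imbalance_neg, neg_eq_iff_eq_neg] using hdiff
  have hle : imbalance c ≤ #{v | c v = 1} := by
    rw [imbalance, ← sum_boole]
    refine sum_le_sum fun v _ => ?_
    rcases Int.units_eq_one_or (c v) with h | h <;> simp [h]
  obtain ⟨U, hU, hcard⟩ : ∃ U ⊆ ({v | c v = 1} : Finset V), #U = (imbalance c / 2).toNat :=
    exists_subset_card_eq (by omega)
  have hsum : ∑ v ∈ U, (c v : ℤ) = #U := by
    rw [card_eq_sum_ones, Nat.cast_sum]
    exact sum_congr rfl fun v hv => by simp [(mem_filter_univ v).1 (hU hv)]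
  refine ⟨U.piecewise (-c) c, ?_, ?_⟩
  · rw [imbalance_piecewise_neg, hsum, abs_le]
    omega
  · have hdiff : ({v | U.piecewise (-c) c v ≠ c v} : Finset V) ⊆ U := fun v hv => by
      by_contra hvU
      simp [hvU] at hv
    have := card_le_card hdiff
    rw [abs_of_nonneg hpos]
    omega

variable [DecidableEq V]

theorem expect_mul_eq_zero_of_disjoint {F : (V → ℤˣ) → V → ℤˣ} (hF : Function.Odd F) {u v : V}
    {S T : Finset V} (hu : DependsOn (fun x => F x u) (S : Set V))
    (hv : DependsOn (fun x => F x v) (T : Set V)) (hST : Disjoint S T) :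
    𝔼 x, (((F x u * F x v : ℤˣ) : ℤ) : ℝ) = 0 := by
  -- Flipping the inputs in `S` preserves the uniform distribution, negates the output at `u` and
  -- does not affect the output at `v`.
  have hinv : Function.Involutive fun x : V → ℤˣ => S.piecewise (-x) x := fun x => by
    ext w
    by_cases hw : w ∈ S <;> simp [hw]
  have hflip (x : V → ℤˣ) : F (S.piecewise (-x) x) u * F (S.piecewise (-x) x) v =
      -(F x u * F x v) := by
    have hflip_u : F (S.piecewise (-x) x) u = F (-x) u :=
      hu fun w hw => piecewise_eq_of_mem _ _ _ hw
    have hflip_v : F (S.piecewise (-x) x) v = F x v :=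
      hv fun w hw => piecewise_eq_of_notMem _ _ _ (disjoint_right.1 hST hw)
    rw [hflip_u, hflip_v, hF x, Pi.neg_apply, neg_mul]
  have hneg : 𝔼 x, (((F x u * F x v : ℤˣ) : ℤ) : ℝ) = -𝔼 x, (((F x u * F x v : ℤˣ) : ℤ) : ℝ) := by
    rw [← expect_neg_distrib]
    refine Fintype.expect_equiv hinv.toPerm _ _ fun x => ?_
    simp only [Function.Involutive.coe_toPerm, hflip, Units.val_neg, Int.cast_neg, neg_neg]
  linarith

theorem expect_imbalance_sq_le {F : (V → ℤˣ) → V → ℤˣ} {B : ℕ} (hodd : Function.Odd F)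
    (hloc : IsLocalMap B F) : 𝔼 x, (imbalance (F x) : ℝ) ^ 2 ≤ card V * (B : ℝ) ^ 2 := by
  obtain ⟨N, hout, hin, hdep⟩ := hloc
  have hpair (u v : V) : 𝔼 x, (((F x u * F x v : ℤˣ) : ℤ) : ℝ) ≤
      if ¬Disjoint (N u) (N v) then 1 else 0 := by
    split_ifs with h
    · exact (expect_mul_eq_zero_of_disjoint hodd (hdep u) (hdep v) h).le
    · refine expect_le univ_nonempty fun x _ => ?_
      rcases Int.units_eq_one_or (F x u * F x v) with h | h <;> simp [h]
  have hcount (u : V) : #{v | ¬Disjoint (N u) (N v)} ≤ B ^ 2 := by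
    have hsub : ({v | ¬Disjoint (N u) (N v)} : Finset V) ⊆
        (N u).biUnion fun w => {v | w ∈ N v} := by
      intro v
      simp only [mem_filter_univ, not_disjoint_iff, mem_biUnion, imp_self]
    calc #{v | ¬Disjoint (N u) (N v)} ≤ #(N u) * B :=
          (card_le_card hsub).trans (card_biUnion_le_card_mul _ _ _ fun w _ => hin w)
      _ ≤ B ^ 2 := by rw [sq]; gcongr; exact hout u
  calc 𝔼 x, (imbalance (F x) : ℝ) ^ 2
      = ∑ u, ∑ v, 𝔼 x, (((F x u * F x v : ℤˣ) : ℤ) : ℝ) := by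
        simp only [← expect_sum_comm, imbalance, sq, Units.val_mul, Int.cast_sum, Int.cast_mul,
          sum_mul_sum]
    _ ≤ ∑ u, ∑ v, if ¬Disjoint (N u) (N v) then 1 else 0 :=
        sum_le_sum fun u _ => sum_le_sum fun v _ => hpair u v
    _ = ∑ u, (#{v | ¬Disjoint (N u) (N v)} : ℝ) := by simp only [sum_boole]
    _ ≤ ∑ _u : V, (B : ℝ) ^ 2 := sum_le_sum fun u _ => by exact_mod_cast hcount u
    _ = card V * (B : ℝ) ^ 2 := by simp

theorem expect_abs_imbalance_le {F : (V → ℤˣ) → V → ℤˣ} {B : ℕ} (hodd : Function.Odd F)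
    (hloc : IsLocalMap B F) : 𝔼 x, |(imbalance (F x) : ℝ)| ≤ B * √(card V) := by
  refine abs_le_of_sq_le_sq (?_ : _ ≤ _) (by positivity) |> le_of_abs_le
  calc (𝔼 x, |(imbalance (F x) : ℝ)|) ^ 2
      ≤ 𝔼 x, (imbalance (F x) : ℝ) ^ 2 := by
        simpa using expect_mul_sq_le_sq_mul_sq univ (fun x => |(imbalance (F x) : ℝ)|) 1
    _ ≤ card V * (B : ℝ) ^ 2 := expect_imbalance_sq_le hodd hloc
    _ = (B * √(card V)) ^ 2 := by rw [mul_pow, Real.sq_sqrt (Nat.cast_nonneg _), mul_comm]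

end Imbalance

section Bisection

variable {V : Type*} [Fintype V] (s : ℤˣ)

theorem card_unhappy_le_add_sum_degree {G G' : SimpleGraph V} [DecidableRel G.Adj]
    [DecidableRel G'.Adj] {c c' : V → ℤˣ} {D : Finset V} (hle : G' ≤ G)
    (hG : ∀ u ∉ D, ∀ v ∉ D, G.Adj u v → G'.Adj u v) (hc : ∀ v ∉ D, c v = c' v) :
    #(unhappy G s c) ≤ #(unhappy G' s c') + ∑ v ∈ D, (G.degree v + 1) := by
  classical
  let N := D.biUnion fun v => insert v (G.neighborFinset v)
  have hsub : unhappy G s c ⊆ unhappy G' s c' ∪ N := fun v hv => by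
    by_contra hvN
    simp only [N, mem_union, mem_biUnion, mem_insert, SimpleGraph.mem_neighborFinset, not_or,
      not_exists, not_and] at hvN
    have hvD : v ∉ D := fun h => (hvN.2 v h).1 rfl
    have hND (w : V) (hvw : G.Adj v w) : w ∉ D := fun h => (hvN.2 w h).2 hvw.symm
    refine hvN.1 ((mem_unhappy G' s).2 ?_)
    rw [← margin_congr (fun w => ⟨fun h => hG v hvD w (hND w h) h, fun h => hle h⟩) (hc v hvD)
      fun w h => hc w (hND w h)]
    exact (mem_unhappy G s).1 hv
  calc #(unhappy G s c) ≤ #(unhappy G' s c') + #N := (card_le_card hsub).trans (card_union_le _ _)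
    _ ≤ #(unhappy G' s c') + ∑ v ∈ D, (G.degree v + 1) := by
      gcongr
      refine card_biUnion_le.trans (sum_le_sum fun v _ => (card_insert_le _ _).trans_eq ?_)
      rw [G.card_neighborFinset_eq_degree]

theorem exists_abs_imbalance_le_one_card_unhappy_le {G : SimpleGraph V} [DecidableRel G.Adj] {Δ : ℕ}
    (hΔ : ∀ v, G.degree v ≤ Δ) (c : V → ℤˣ) :
    ∃ c' : V → ℤˣ, |imbalance c'| ≤ 1 ∧
      (#(unhappy G s c') : ℤ) ≤ #(unhappy G s c) + (Δ + 1) * |imbalance c| := by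
  obtain ⟨c', hbal, hdiff⟩ := exists_abs_imbalance_le_one c
  refine ⟨c', hbal, ?_⟩
  have hperturb : #(unhappy G s c') ≤
      #(unhappy G s c) + ∑ v with c' v ≠ c v, (G.degree v + 1) :=
    card_unhappy_le_add_sum_degree s le_rfl (fun _ _ _ _ => id) (by simp)
  have hsum : ∑ v with c' v ≠ c v, (G.degree v + 1) ≤ #{v | c' v ≠ c v} * (Δ + 1) :=
    sum_le_card_nsmul _ _ _ fun v _ => Nat.succ_le_succ (hΔ v)
  calc (#(unhappy G s c') : ℤ) ≤ #(unhappy G s c) + #{v | c' v ≠ c v} * (Δ + 1) := by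
        exact_mod_cast hperturb.trans (Nat.add_le_add_left hsum _)
    _ ≤ #(unhappy G s c) + (Δ + 1) * |imbalance c| := by
        rw [mul_comm]
        gcongr

theorem exists_card_unhappy_le_of_degree_le {G : SimpleGraph V} [DecidableRel G.Adj] {Δ : ℕ}
    (hΔ : ∀ v, G.degree v ≤ Δ) {η : ℝ} {T : ℕ} (hT : 2 * Δ < T * (4 / (Δ + 1) * η))
    (hcard : (Δ + 1) ^ (T + 1) ≤ η * √(card V)) :
    ∃ c : V → ℤˣ, |imbalance c| ≤ 1 ∧ #(unhappy G s c) ≤ 2 * η * card V := by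
  classical
  obtain ⟨F, hodd, hloc, hfew⟩ := exists_odd_isLocalMap_expect_card_unhappy_le s hΔ hT
  have hmean : 𝔼 x, (#(unhappy G s (F x)) + (Δ + 1) * |(imbalance (F x) : ℝ)|) ≤
      2 * η * card V := by
    calc 𝔼 x, (#(unhappy G s (F x)) + (Δ + 1) * |(imbalance (F x) : ℝ)|)
        = 𝔼 x, (#(unhappy G s (F x)) : ℝ) + (Δ + 1) * 𝔼 x, |(imbalance (F x) : ℝ)| := by
          rw [expect_add_distrib, mul_expect]
      _ ≤ η * card V + (Δ + 1) * (((Δ + 1) ^ T : ℕ) * √(card V)) := by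
          gcongr
          exact expect_abs_imbalance_le hodd hloc
      _ = η * card V + (Δ + 1) ^ (T + 1) * √(card V) := by
          push_cast
          ring
      _ ≤ η * card V + η * √(card V) * √(card V) := by gcongr
      _ = 2 * η * card V := by
          rw [mul_assoc η, Real.mul_self_sqrt (Nat.cast_nonneg _)]
          ring
  obtain ⟨x, -, hx⟩ := exists_le_of_expect_le univ_nonempty hmean
  obtain ⟨c, hbal, hc⟩ := exists_abs_imbalance_le_one_card_unhappy_le s hΔ (F x)
  exact ⟨c, hbal, le_trans (by exact_mod_cast hc) hx⟩

theorem exists_card_unhappy_le_add_sum_degree (G : SimpleGraph V) [DecidableRel G.Adj] {Δ T : ℕ}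
    {η : ℝ} (hT : 2 * Δ < T * (4 / (Δ + 1) * η)) (hcard : (Δ + 1) ^ (T + 1) ≤ η * √(card V)) :
    ∃ c : V → ℤˣ, |imbalance c| ≤ 1 ∧
      #(unhappy G s c) ≤ 2 * η * card V + ∑ v with Δ < G.degree v, (G.degree v + 1 : ℝ) := by
  classical
  let H := (G.induce {v | G.degree v ≤ Δ}).spanningCoe
  have hle : H ≤ G := SimpleGraph.spanningCoe_induce_le G _
  have hH (v : V) : H.degree v ≤ Δ := by
    by_cases hv : G.degree v ≤ Δ
    · exact (SimpleGraph.degree_le_of_le hle).trans hv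
    · have hisolated : H.degree v = 0 := by
        rw [SimpleGraph.degree_eq_zero_iff_notMem_support]
        rintro ⟨w, hvw⟩
        obtain ⟨-, hv', -⟩ : G.Adj v w ∧ G.degree v ≤ Δ ∧ G.degree w ≤ Δ := by simpa [H] using hvw
        exact hv hv'
      omega
  obtain ⟨c, hbal, hc⟩ := exists_card_unhappy_le_of_degree_le s hH hT hcard
  have hperturb : #(unhappy G s c) ≤
      #(unhappy H s c) + ∑ v with Δ < G.degree v, (G.degree v + 1) :=
    card_unhappy_le_add_sum_degree s hle (fun u hu v hv huv => by simp_all [H]) fun _ _ => rfl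
  refine ⟨c, hbal, ?_⟩
  calc (#(unhappy G s c) : ℝ)
      ≤ #(unhappy H s c) + ∑ v with Δ < G.degree v, (G.degree v + 1 : ℝ) := by
        exact_mod_cast hperturb
    _ ≤ 2 * η * card V + ∑ v with Δ < G.degree v, (G.degree v + 1 : ℝ) := by gcongr

theorem sum_filter_degree_add_one_le (G : SimpleGraph V) [DecidableRel G.Adj] (Δ : ℕ) :
    ∑ v with Δ < G.degree v, (G.degree v + 1 : ℝ) ≤
      2 * (∑ v, (G.degree v : ℝ) ^ 2) / (Δ + 1) := by
  rw [le_div_iff₀ (by positivity), sum_mul, mul_sum]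
  refine (sum_le_sum fun v hv => ?_).trans
    (sum_le_sum_of_subset_of_nonneg (filter_subset _ _) fun v _ _ => by positivity)
  have hΔ : (Δ + 1 : ℝ) ≤ G.degree v := by exact_mod_cast (mem_filter_univ v).1 hv
  nlinarith [(Nat.cast_nonneg Δ : (0 : ℝ) ≤ Δ)]

theorem exists_forall_card_unhappy_le (K : ℝ) {ε : ℝ} (hε : 0 < ε) :
    ∃ n₀ : ℕ, ∀ (V : Type*) [Fintype V] (G : SimpleGraph V) [DecidableRel G.Adj],
      n₀ ≤ card V → ∑ v, (G.degree v : ℝ) ^ 2 ≤ K * card V →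
        ∃ c : V → ℤˣ, |imbalance c| ≤ 1 ∧ #(unhappy G s c) ≤ ε * card V := by
  obtain ⟨Δ, hΔ⟩ := exists_nat_ge (4 * K / ε)
  obtain ⟨T, hT⟩ := exists_nat_gt (2 * Δ / (4 / (Δ + 1) * (ε / 4)))
  obtain ⟨n₀, hn₀⟩ := exists_nat_ge (((Δ + 1) ^ (T + 1) / (ε / 4)) ^ 2)
  refine ⟨n₀, fun V _ G _ hcard hdeg => ?_⟩
  have hT' : 2 * Δ < T * (4 / (Δ + 1) * (ε / 4)) := (div_lt_iff₀ (by positivity)).1 hT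
  have hlarge : (Δ + 1) ^ (T + 1) ≤ ε / 4 * √(card V) := by
    rw [← div_le_iff₀' (by positivity)]
    exact Real.le_sqrt_of_sq_le (hn₀.trans (by exact_mod_cast hcard))
  obtain ⟨c, hbal, hc⟩ := exists_card_unhappy_le_add_sum_degree s G hT' hlarge
  have htail : ∑ v with Δ < G.degree v, (G.degree v + 1 : ℝ) ≤ ε / 2 * card V := by
    refine (sum_filter_degree_add_one_le G Δ).trans ((div_le_iff₀ (by positivity)).2 ?_)
    have hK : 4 * K ≤ (Δ + 1) * ε := by linarith [(div_le_iff₀ hε).1 hΔ]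
    calc 2 * ∑ v, (G.degree v : ℝ) ^ 2 ≤ 4 * K * card V / 2 := by linarith
      _ ≤ (Δ + 1) * ε * card V / 2 := by gcongr
      _ = ε / 2 * card V * (Δ + 1) := by ring
  exact ⟨c, hbal, by linarith⟩

end Bisection

section ErdosRenyi

variable {n : ℕ}

/-- The simple graph whose adjacency relation is `GrAdj A`. -/
def adjGraph (A : Fin n → Fin n → Bool) : SimpleGraph (Fin n) where
  Adj := GrAdj A
  symm := ⟨fun u v ⟨hne, h⟩ => ⟨hne.symm, by rwa [min_comm, max_comm]⟩⟩
  loopless := ⟨fun _ h => h.1 rfl⟩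

instance (A : Fin n → Fin n → Bool) : DecidableRel (adjGraph A).Adj :=
  fun u v => inferInstanceAs (Decidable (u ≠ v ∧ A (min u v) (max u v) = true))

theorem adjGraph_adj {A : Fin n → Fin n → Bool} {u v : Fin n} :
    (adjGraph A).Adj u v ↔ GrAdj A u v :=
  Iff.rfl

theorem ncard_setOf_grAdj (A : Fin n → Fin n → Bool) (v : Fin n) :
    ({w | GrAdj A v w} : Set (Fin n)).ncard = (adjGraph A).degree v := by
  rw [← SimpleGraph.card_neighborFinset_eq_degree, ← Set.ncard_coe_finset,
    SimpleGraph.coe_neighborFinset]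
  rfl

theorem ncard_setOf_grAdj_and (A : Fin n → Fin n → Bool) (v : Fin n) (P : Fin n → Prop)
    [DecidablePred P] :
    ({w | GrAdj A v w ∧ P w} : Set (Fin n)).ncard = #{w ∈ (adjGraph A).neighborFinset v | P w} := by
  rw [← Set.ncard_coe_finset, coe_filter]
  simp only [SimpleGraph.mem_neighborFinset, adjGraph_adj]

theorem not_internalAt_iff {A : Fin n → Fin n → Bool} {c : Fin n → ℤˣ} {v : Fin n} :
    ¬ InternalAt A (fun w => decide (c w = 1)) v ↔ v ∈ unhappy (adjGraph A) 1 c := by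
  have hsame (w : Fin n) : decide (c w = 1) = decide (c v = 1) ↔ c w = 1 * c v := by
    rcases Int.units_eq_one_or (c w) with h | h <;>
      rcases Int.units_eq_one_or (c v) with h' | h' <;> simp [h, h']
  rw [InternalAt, ncard_setOf_grAdj, ncard_setOf_grAdj_and, mem_unhappy,
    margin_eq_two_mul_card_sub_degree]
  simp only [hsame]
  omega

theorem not_externalAt_iff {A : Fin n → Fin n → Bool} {c : Fin n → ℤˣ} {v : Fin n} :
    ¬ ExternalAt A (fun w => decide (c w = 1)) v ↔ v ∈ unhappy (adjGraph A) (-1) c := by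
  have hdiff (w : Fin n) : decide (c w = 1) ≠ decide (c v = 1) ↔ c w = -1 * c v := by
    rcases Int.units_eq_one_or (c w) with h | h <;>
      rcases Int.units_eq_one_or (c v) with h' | h' <;> simp [h, h']
  rw [ExternalAt, ncard_setOf_grAdj, ncard_setOf_grAdj_and, mem_unhappy,
    margin_eq_two_mul_card_sub_degree]
  simp only [hdiff]
  omega

theorem isBisection_of_abs_imbalance_le_one {c : Fin n → ℤˣ} (hc : |imbalance c| ≤ 1) :
    IsBisection fun v => decide (c v = 1) := by
  have hterm (v : Fin n) : (c v : ℤ) = (if c v = 1 then 1 else 0) - if c v ≠ 1 then 1 else 0 := by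
    rcases Int.units_eq_one_or (c v) with h | h <;> simp [h]
  rw [imbalance] at hc
  simp only [hterm, sum_sub_distrib, sum_boole] at hc
  simpa only [IsBisection, decide_eq_true_eq, decide_eq_false_iff_not, ← coe_filter_univ,
    Set.ncard_coe_finset] using hc

theorem exists_forall_almost_bisections (K : ℝ) {ε : ℝ} (hε : 0 < ε) :
    ∃ n₀ : ℕ, ∀ n ≥ n₀, ∀ A : Fin n → Fin n → Bool,
      ∑ v, ((adjGraph A).degree v : ℝ) ^ 2 ≤ K * n →
        (∃ c : Fin n → Bool, IsBisection c ∧ AlmostInternal A c ε) ∧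
          (∃ c : Fin n → Bool, IsBisection c ∧ AlmostExternal A c ε) := by
  obtain ⟨n₁, hint⟩ := exists_forall_card_unhappy_le 1 K hε
  obtain ⟨n₂, hext⟩ := exists_forall_card_unhappy_le (-1) K hε
  refine ⟨max n₁ n₂, fun n hn A hdeg => ⟨?_, ?_⟩⟩
  · obtain ⟨c, hbal, hc⟩ := hint (Fin n) (adjGraph A)
      (by simpa using le_of_max_le_left hn) (by simpa using hdeg)
    refine ⟨_, isBisection_of_abs_imbalance_le_one hbal, ?_⟩
    simpa [AlmostInternal, not_internalAt_iff] using hc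
  · obtain ⟨c, hbal, hc⟩ := hext (Fin n) (adjGraph A)
      (by simpa using le_of_max_le_right hn) (by simpa using hdeg)
    refine ⟨_, isBisection_of_abs_imbalance_le_one hbal, ?_⟩
    simpa [AlmostExternal, not_externalAt_iff] using hc

theorem isProbabilityMeasure_bernoulliM {p : ℝ} (hp : p ∈ Set.Icc 0 1) :
    IsProbabilityMeasure (bernoulliM p) where
  measure_univ := by
    simp only [bernoulliM, Measure.add_apply, Measure.smul_apply, measure_univ, ENNReal.smul_def,
      smul_eq_mul, mul_one]
    rw [← ENNReal.coe_add, ← Real.toNNReal_add hp.1 (sub_nonneg.2 hp.2), add_sub_cancel,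
      Real.toNNReal_one, ENNReal.coe_one]

theorem isProbabilityMeasure_erMeasure {p : ℝ} (hp : p ∈ Set.Icc 0 1) :
    IsProbabilityMeasure (erMeasure n p) := by
  have := isProbabilityMeasure_bernoulliM hp
  unfold erMeasure
  infer_instance

theorem erMeasure_real_forall_eq_true {p : ℝ} (hp : p ∈ Set.Icc 0 1) (E : Finset (Fin n × Fin n)) :
    (erMeasure n p).real {A | ∀ e ∈ E, A e.1 e.2 = true} = p ^ #E := by
  have hpi : {A : Fin n → Fin n → Bool | ∀ e ∈ E, A e.1 e.2 = true} =
      Set.univ.pi fun i => Set.univ.pi fun j => if (i, j) ∈ E then {true} else Set.univ := by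
    ext A
    simp only [Set.mem_ofPred_eq, Set.mem_univ_pi, Prod.forall]
    refine forall₂_congr fun i j => ?_
    split_ifs with h <;> simp [h]
  have := isProbabilityMeasure_bernoulliM hp
  have hentry (i j : Fin n) : bernoulliM p (if (i, j) ∈ E then {true} else Set.univ) =
      if (i, j) ∈ E then ENNReal.ofReal p else 1 := by
    split_ifs
    · simp [bernoulliM, ENNReal.ofReal]
    · exact measure_univ
  simp only [Measure.real, hpi, erMeasure, Measure.pi_pi, hentry]
  rw [← Fintype.prod_prod_type', prod_ite_mem, univ_inter, prod_const, ENNReal.toReal_pow,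
    ENNReal.toReal_ofReal hp.1]

theorem erMeasure_real_grAdj_and_grAdj_le {p : ℝ} (hp : p ∈ Set.Icc 0 1) (v w w' : Fin n) :
    (erMeasure n p).real {A | GrAdj A v w ∧ GrAdj A v w'} ≤ if w = w' then p else p ^ 2 := by
  let e (w : Fin n) : Fin n × Fin n := (min v w, max v w)
  have hinj : e w = e w' → w = w' := by grind
  have := isProbabilityMeasure_erMeasure (n := n) hp
  calc (erMeasure n p).real {A | GrAdj A v w ∧ GrAdj A v w'}
      ≤ (erMeasure n p).real {A | ∀ f ∈ ({e w, e w'} : Finset _), A f.1 f.2 = true} :=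
        measureReal_mono fun A hA => by simpa [e] using ⟨hA.1.2, hA.2.2⟩
    _ = p ^ #{e w, e w'} := erMeasure_real_forall_eq_true hp _
    _ = if w = w' then p else p ^ 2 := by
      split_ifs with h
      · simp [h]
      · rw [card_pair (mt hinj h)]

theorem degree_sq_eq_sum_indicator (A : Fin n → Fin n → Bool) (v : Fin n) :
    ((adjGraph A).degree v : ℝ) ^ 2 =
      ∑ w, ∑ w', {A | GrAdj A v w ∧ GrAdj A v w'}.indicator 1 A := by
  classical
  rw [← SimpleGraph.card_neighborFinset_eq_degree, SimpleGraph.neighborFinset_eq_filter,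
    ← sum_boole, sq, sum_mul_sum]
  simp only [adjGraph_adj, Set.indicator_apply, Set.mem_ofPred_eq, ite_and, Pi.one_apply, ite_mul,
    one_mul, zero_mul]

theorem integral_sum_degree_sq_le {p : ℝ} (hp : p ∈ Set.Icc 0 1) :
    ∫ A, ∑ v, ((adjGraph A).degree v : ℝ) ^ 2 ∂(erMeasure n p) ≤ (n * p + (n * p) ^ 2) * n := by
  calc ∫ A, ∑ v, ((adjGraph A).degree v : ℝ) ^ 2 ∂(erMeasure n p)
      = ∑ v, ∑ w, ∑ w', (erMeasure n p).real {A | GrAdj A v w ∧ GrAdj A v w'} := by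
        have := isProbabilityMeasure_erMeasure (n := n) hp
        simp only [degree_sq_eq_sum_indicator, integral_finsetSum _ fun _ _ => Integrable.of_finite,
          integral_indicator_one (Set.toFinite _).measurableSet]
    _ ≤ ∑ _v : Fin n, ∑ w : Fin n, ∑ w', if w = w' then p else p ^ 2 := by
        gcongr
        exact erMeasure_real_grAdj_and_grAdj_le hp _ _ _
    _ ≤ ∑ _v : Fin n, ∑ w : Fin n, ∑ w', ((if w = w' then p else 0) + p ^ 2) := by
        gcongr
        split_ifs <;> nlinarith [sq_nonneg p]
    _ = (n * p + (n * p) ^ 2) * n := by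
        simp [sum_add_distrib]
        ring

theorem erMeasure_real_sum_degree_sq_ge_le {p K : ℝ} (hp : p ∈ Set.Icc 0 1) (hK : 0 < K)
    (hn : 0 < n) :
    (erMeasure n p).real {A | K * n ≤ ∑ v, ((adjGraph A).degree v : ℝ) ^ 2} ≤
      (n * p + (n * p) ^ 2) / K := by
  have := isProbabilityMeasure_erMeasure (n := n) hp
  have hmarkov := (mul_meas_ge_le_integral_of_nonneg (μ := erMeasure n p)
    (ae_of_all _ fun A => sum_nonneg fun v _ => sq_nonneg ((adjGraph A).degree v : ℝ))
    .of_finite (K * n)).trans (integral_sum_degree_sq_le hp)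
  rw [le_div_iff₀' hK]
  exact le_of_mul_le_mul_right (by linarith) (Nat.cast_pos.2 hn : (0 : ℝ) < n)

end ErdosRenyi

theorem tendsto_measure_one_of_forall_eventually_compl_le {ι : Type*} {l : Filter ι} {Ω : ι → Type*}
    [∀ i, MeasurableSpace (Ω i)] {μ : ∀ i, Measure (Ω i)} [∀ i, IsProbabilityMeasure (μ i)]
    {S : ∀ i, Set (Ω i)} (hS : ∀ i, MeasurableSet (S i))
    (h : ∀ δ > 0, ∀ᶠ i in l, (μ i).real (S i)ᶜ ≤ δ) :
    Tendsto (fun i => μ i (S i)) l (nhds 1) := by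
  rw [← ENNReal.tendsto_toReal_iff (fun i => measure_ne_top _ _) ENNReal.one_ne_top,
    ENNReal.toReal_one, tendsto_order]
  refine ⟨fun a ha => ?_, fun a ha => .of_forall fun i => measureReal_le_one.trans_lt ha⟩
  filter_upwards [h ((1 - a) / 2) (by linarith)] with i hi
  rw [probReal_compl_eq_one_sub (hS i)] at hi
  change a < (μ i).real (S i)
  linarith

/-- If `limsup n·pₙ < ∞` (i.e. `n·pₙ` is eventually bounded), then whp `𝔾(n,pₙ)` has an
`ε`-almost-internal bisection and an `ε`-almost-external bisection. -/
theorem whp_almost_internal_external_bisections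
    (p : ℕ → ℝ) (hp : ∀ n, p n ∈ Set.Icc (0 : ℝ) 1)
    (hbdd : ∃ C : ℝ, ∀ᶠ n : ℕ in atTop, (n : ℝ) * p n ≤ C)
    (ε : ℝ) (hε : 0 < ε) :
    Tendsto (fun n => erMeasure n (p n)
        {A | (∃ c : Fin n → Bool, IsBisection c ∧ AlmostInternal A c ε) ∧
             (∃ c : Fin n → Bool, IsBisection c ∧ AlmostExternal A c ε)})
      atTop (nhds 1) := by
  obtain ⟨C, hC⟩ := hbdd
  have (n : ℕ) := isProbabilityMeasure_erMeasure (n := n) (hp n)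
  refine tendsto_measure_one_of_forall_eventually_compl_le
    (fun n => (Set.toFinite _).measurableSet) fun δ hδ => ?_
  let K := max ((C + C ^ 2) / δ) 1
  have hK : 0 < K := lt_max_of_lt_right one_pos
  obtain ⟨n₀, hgood⟩ := exists_forall_almost_bisections K hε
  filter_upwards [hC, eventually_ge_atTop n₀, eventually_gt_atTop 0] with n hnp hn hpos
  have hnp0 : 0 ≤ n * p n := mul_nonneg n.cast_nonneg (hp n).1
  calc (erMeasure n (p n)).real _
      ≤ (erMeasure n (p n)).real {A | K * n ≤ ∑ v, ((adjGraph A).degree v : ℝ) ^ 2} :=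
        measureReal_mono fun A (hA : A ∉ _) => le_of_not_ge fun hdeg => hA (hgood n hn A hdeg)
    _ ≤ (n * p n + (n * p n) ^ 2) / K := erMeasure_real_sum_degree_sq_ge_le (hp n) hK hpos
    _ ≤ (C + C ^ 2) / K := by gcongr
    _ ≤ δ := (div_le_comm₀ hδ hK).1 (le_max_left _ _)
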